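/- Let X_1,…,X_n be i.i.d. N_p(0, I_p) Gaussian vectors, let 1 ≤ S < p/2, and let W ⊆ {1,…,S} have w ≥ 1 elements. Then for every K ∈ (0,1) and every u > 0, P[ Tr(A_W(Σ_n − I_p)) ≥ t ] ≤ exp(−u/4), where t = max{ √(u/(2(1−K))) · √(w/(n(p−S))), (u/K) · w/(n(p−S)) }. -/

import Mathlib

open MeasureTheory Matrix Real
open scoped ENNReal BigOperators NNReal

noncomputable def gaussianPDF {p : ℕ} (C : Matrix (Fin p) (Fin p) ℝ) (x : Fin p → ℝ) : ℝ≥0∞ :=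
  ENNReal.ofReal ((2 * Real.pi) ^ (-(p : ℝ) / 2) * C.det ^ (-(1:ℝ)/2) *
    Real.exp (-(1/2) * (x ⬝ᵥ C⁻¹.mulVec x)))

/-- The centered multivariate Gaussian measure `N_p(0, C)` on `Fin p → ℝ`. -/
noncomputable def gaussianMeasure {p : ℕ} (C : Matrix (Fin p) (Fin p) ℝ) :
    Measure (Fin p → ℝ) :=
  MeasureTheory.volume.withDensity (gaussianPDF C)

/-- The law of `n` i.i.d. `N_p(0, C)` vectors. -/
noncomputable def iidGaussian (n p : ℕ) (C : Matrix (Fin p) (Fin p) ℝ) :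
    Measure (Fin n → Fin p → ℝ) :=
  MeasureTheory.volume.withDensity fun X => ∏ k, gaussianPDF C (X k)

/-- The sample covariance matrix `Σ_n = (1/n) ∑ X_k X_kᵀ`. -/
noncomputable def sampleCov {n p : ℕ} (X : Fin n → Fin p → ℝ) :
    Matrix (Fin p) (Fin p) ℝ :=
  (n : ℝ)⁻¹ • ∑ k, Matrix.of fun i j => X k i * X k j

/-- Frobenius norm of a matrix. -/
noncomputable def frobNorm {p : ℕ} (M : Matrix (Fin p) (Fin p) ℝ) : ℝ :=
  Real.sqrt (∑ i, ∑ j, (M i j)^2)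

/-- Spectral (ℓ²-operator) norm of a matrix. -/
noncomputable def specNorm {p : ℕ} (M : Matrix (Fin p) (Fin p) ℝ) : ℝ :=
  ‖Matrix.toEuclideanCLM (𝕜 := ℝ) M‖

/-- The matrix `A_j` with entries `1/(2(p-j))` on the `j`-th upper and lower diagonals. -/
noncomputable def lagMatrix (p j : ℕ) : Matrix (Fin p) (Fin p) ℝ :=
  Matrix.of fun k l => if ((k:ℤ) - (l:ℤ)).natAbs = j then 1/(2*((p:ℝ) - j)) else 0

/-- Two-sided class `F(s,S,σ)` of sparse Toeplitz covariance matrices with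
diagonal value `σ0`. -/
def memF (p s S : ℕ) (σ σ0 : ℝ) (C : Matrix (Fin p) (Fin p) ℝ) : Prop :=
  C.PosDef ∧ ∃ v : ℕ → ℝ, v 0 = σ0 ∧
    (∀ i j : Fin p, C i j = v ((i:ℤ) - (j:ℤ)).natAbs) ∧
    ∃ T : Finset ℕ, T ⊆ Finset.Icc 1 S ∧ T.card = s ∧
      (∀ j ∈ T, σ ≤ |v j|) ∧ (∀ j, 1 ≤ j → j ≤ p - 1 → j ∉ T → v j = 0)

/-- One-sided class `F₊(s,S,σ)` of sparse Toeplitz covariance matrices with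
diagonal value `σ0`. -/
def memFplus (p s S : ℕ) (σ σ0 : ℝ) (C : Matrix (Fin p) (Fin p) ℝ) : Prop :=
  C.PosDef ∧ ∃ v : ℕ → ℝ, v 0 = σ0 ∧
    (∀ i j : Fin p, C i j = v ((i:ℤ) - (j:ℤ)).natAbs) ∧
    ∃ T : Finset ℕ, T ⊆ Finset.Icc 1 S ∧ T.card = s ∧
      (∀ j ∈ T, σ ≤ v j) ∧ (∀ j, 1 ≤ j → j ≤ p - 1 → j ∉ T → v j = 0)


section Auxiliary

/-- Tonelli's theorem for a product of functions of one variable each. -/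
theorem lintegral_fin_prod_eq_prod_lintegral {E : Type*} [MeasureSpace E]
    [SigmaFinite (volume : Measure E)] {n : ℕ} {f : Fin n → E → ℝ≥0∞}
    (hf : ∀ i, Measurable (f i)) :
    ∫⁻ x : Fin n → E, ∏ i, f i (x i) = ∏ i, ∫⁻ x, f i x := by
  induction n with
  | zero => simp [volume_pi]
  | succ n ih =>
    have hmp := (volume_preserving_piFinSuccAbove (fun _ : Fin (n + 1) => E) 0).symm
    rw [← hmp.lintegral_comp_emb (MeasurableEquiv.measurableEmbedding _)]
    simp only [MeasurableEquiv.piFinSuccAbove_symm_apply, Fin.prod_univ_succ, Fin.insertNthEquiv,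
      Equiv.coe_fn_mk, Fin.insertNth_zero, Fin.cons_zero, Fin.cons_succ, Fin.zero_succAbove]
    rw [← ih (f := fun i => f i.succ) fun i => hf i.succ]
    have hm : Measurable fun y : Fin n → E => ∏ i, f i.succ (y i) :=
      Finset.measurable_prod _ fun i _ => (hf i.succ).comp (measurable_pi_apply i)
    exact lintegral_prod_mul (hf 0).aemeasurable hm.aemeasurable

theorem neg_log_one_sub_le {x b : ℝ} (hx : |x| ≤ b) (hb : b < 1) :
    -Real.log (1 - x) ≤ x + x ^ 2 / (2 * (1 - b)) := by
  obtain ⟨hx1, hx2⟩ := abs_le.mp hx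
  have hb' : 0 < 1 - b := by linarith
  rcases le_total 0 x with h0 | h0
  · have hpos : 0 < 1 - x := by linarith
    have hlog : 0 ≤ Real.log (1 - x)⁻¹ := Real.log_nonneg ((one_le_inv₀ hpos).2 (by linarith))
    have hsinh := Real.self_le_sinh_iff.2 hlog
    rw [Real.sinh_log (by positivity), inv_inv, Real.log_inv] at hsinh
    have hrw : ((1 - x)⁻¹ - (1 - x)) / 2 = x + x ^ 2 / (2 * (1 - x)) := by
      field_simp
      ring
    have hmono : x ^ 2 / (2 * (1 - x)) ≤ x ^ 2 / (2 * (1 - b)) := by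
      gcongr
    linarith
  · have hlog := Real.le_log_one_add_of_nonneg (x := -x) (by linarith)
    have hle : -x - x ^ 2 / 2 ≤ 2 * -x / (-x + 2) := by
      rw [le_div_iff₀ (by linarith)]
      nlinarith [mul_nonneg (sq_nonneg x) (neg_nonneg.2 h0)]
    have hmono : x ^ 2 / 2 ≤ x ^ 2 / (2 * (1 - b)) := by
      gcongr
      linarith [abs_nonneg x]
    have : 1 + -x = 1 - x := by ring
    rw [this] at hlog
    linarith

theorem inv_sqrt_one_sub_le_exp {x b : ℝ} (hx : |x| ≤ b) (hb : b < 1) :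
    (√(1 - x))⁻¹ ≤ Real.exp (x / 2 + x ^ 2 / (4 * (1 - b))) := by
  have hpos : 0 < 1 - x := by linarith [le_abs_self x]
  rw [← Real.exp_log (inv_pos.2 (Real.sqrt_pos.2 hpos)), Real.exp_le_exp, Real.log_inv,
    Real.log_sqrt hpos.le]
  have h := neg_log_one_sub_le hx hb
  have : x ^ 2 / (4 * (1 - b)) = x ^ 2 / (2 * (1 - b)) / 2 := by
    rw [div_div]
    ring
  linarith

theorem lintegral_gaussian_exp_mul_sq {s : ℝ} (hs : s < 1) :
    ∫⁻ y : ℝ, ENNReal.ofReal ((√(2 * π))⁻¹ * Real.exp (-((1 - s) / 2) * y ^ 2)) =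
      ENNReal.ofReal (√(1 - s))⁻¹ := by
  have hs' : 0 < (1 - s) / 2 := by linarith
  rw [← ofReal_integral_eq_lintegral_ofReal ((integrable_exp_neg_mul_sq hs').const_mul _)
    (ae_of_all _ fun y => by positivity), integral_const_mul, integral_gaussian]
  congr 1
  rw [← Real.sqrt_inv, ← Real.sqrt_inv, ← Real.sqrt_mul (by positivity)]
  congr 1
  have : 1 - s ≠ 0 := by linarith
  field_simp

theorem gaussianPDF_one {p : ℕ} (x : Fin p → ℝ) :
    gaussianPDF 1 x = ENNReal.ofReal ((√(2 * π))⁻¹ ^ p * Real.exp (-(1 / 2) * (x ⬝ᵥ x))) := by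
  have h : (2 * π) ^ (-(p : ℝ) / 2) = (√(2 * π))⁻¹ ^ p := by
    rw [Real.sqrt_eq_rpow, ← Real.rpow_neg (by positivity), ← Real.rpow_mul_natCast (by positivity)]
    congr 1
    ring
  simp [gaussianPDF, h]

theorem measurable_gaussianPDF_one {p : ℕ} :
    Measurable (gaussianPDF (1 : Matrix (Fin p) (Fin p) ℝ)) := by
  have h : gaussianPDF (1 : Matrix (Fin p) (Fin p) ℝ) = _ := funext gaussianPDF_one
  rw [h]
  simp only [dotProduct]
  fun_prop

theorem measurable_quadraticForm {p : ℕ} (A : Matrix (Fin p) (Fin p) ℝ) :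
    Measurable fun x : Fin p → ℝ => x ⬝ᵥ A *ᵥ x := by
  simp only [dotProduct, mulVec]
  fun_prop

theorem measurePreserving_toLin'_unitary {p : ℕ} (U : Matrix.unitaryGroup (Fin p) ℝ) :
    MeasurePreserving (toLin' (U : Matrix (Fin p) (Fin p) ℝ)) volume volume := by
  have hdet : |(U : Matrix (Fin p) (Fin p) ℝ).det| = 1 := by
    have h := Matrix.UnitaryGroup.star_mul_self U
    have h2 := congrArg Matrix.det h
    rw [Matrix.det_mul, Matrix.star_eq_conjTranspose, Matrix.det_conjTranspose, star_trivial,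
      Matrix.det_one] at h2
    rw [← sq_eq_sq₀ (abs_nonneg _) zero_le_one, sq_abs]
    linarith
  refine ⟨(LinearMap.continuous_on_pi _).measurable, ?_⟩
  rw [Real.map_matrix_volume_pi_eq_smul_volume_pi (by rw [← abs_pos, hdet]; exact one_pos),
    abs_inv, hdet]
  simp

/-- The exponential moment of a quadratic form in a standard Gaussian vector. -/
theorem lintegral_gaussianPDF_one_mul_exp {p : ℕ} {A : Matrix (Fin p) (Fin p) ℝ}
    (hA : A.IsHermitian) {c : ℝ} (hc : ∀ i, 2 * c * hA.eigenvalues i < 1) :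
    ∫⁻ x, gaussianPDF 1 x * ENNReal.ofReal (Real.exp (c * (x ⬝ᵥ A *ᵥ x))) =
      ∏ i, ENNReal.ofReal (√(1 - 2 * c * hA.eigenvalues i))⁻¹ := by
  set U := hA.eigenvectorUnitary
  have hmeas : Measurable fun x : Fin p → ℝ =>
      gaussianPDF 1 x * ENNReal.ofReal (Real.exp (c * (x ⬝ᵥ A *ᵥ x))) :=
    measurable_gaussianPDF_one.mul
      ((measurable_quadraticForm A).const_mul c).exp.ennreal_ofReal
  rw [← (measurePreserving_toLin'_unitary U).lintegral_comp hmeas]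
  have hUU : (U : Matrix (Fin p) (Fin p) ℝ)ᵀ * U = 1 := by
    have h := Matrix.UnitaryGroup.star_mul_self U
    rwa [Matrix.star_eq_conjTranspose, Matrix.conjTranspose_eq_transpose_of_trivial] at h
  have hUAU : (U : Matrix (Fin p) (Fin p) ℝ)ᵀ * (A * U) = diagonal hA.eigenvalues := by
    have h := hA.conjStarAlgAut_star_eigenvectorUnitary
    rw [Unitary.conjStarAlgAut_star_apply, Matrix.star_eq_conjTranspose,
      Matrix.conjTranspose_eq_transpose_of_trivial, Matrix.mul_assoc] at h
    simpa using h
  have hdot : ∀ y : Fin p → ℝ,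
      ((U : Matrix (Fin p) (Fin p) ℝ) *ᵥ y) ⬝ᵥ ((U : Matrix (Fin p) (Fin p) ℝ) *ᵥ y) =
      ∑ i, y i ^ 2 := fun y => by
    rw [dotProduct_mulVec, vecMul_mulVec, hUU]
    simp [dotProduct, sq]
  have hquad : ∀ y : Fin p → ℝ,
      ((U : Matrix (Fin p) (Fin p) ℝ) *ᵥ y) ⬝ᵥ A *ᵥ ((U : Matrix (Fin p) (Fin p) ℝ) *ᵥ y) =
        ∑ i, hA.eigenvalues i * y i ^ 2 := fun y => by
    rw [mulVec_mulVec, dotProduct_mulVec, vecMul_mulVec, hUAU]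
    simp only [dotProduct, vecMul_diagonal]
    exact Finset.sum_congr rfl fun i _ => by ring
  have hprod : ∀ y : Fin p → ℝ,
      gaussianPDF 1 (toLin' (U : Matrix (Fin p) (Fin p) ℝ) y) * ENNReal.ofReal (Real.exp
        (c * (toLin' (U : Matrix (Fin p) (Fin p) ℝ) y ⬝ᵥ
          A *ᵥ toLin' (U : Matrix (Fin p) (Fin p) ℝ) y))) =
      ∏ i, ENNReal.ofReal ((√(2 * π))⁻¹ *
        Real.exp (-((1 - 2 * c * hA.eigenvalues i) / 2) * y i ^ 2)) := fun y => by
    rw [toLin'_apply, gaussianPDF_one, hdot, hquad, ← ENNReal.ofReal_mul (by positivity),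
      ← ENNReal.ofReal_prod_of_nonneg fun i _ => by positivity, Finset.prod_mul_distrib,
      Finset.prod_const, Finset.card_univ, Fintype.card_fin, ← Real.exp_sum, mul_assoc,
      ← Real.exp_add, Finset.mul_sum, Finset.mul_sum, ← Finset.sum_add_distrib]
    congr 3
    exact Finset.sum_congr rfl fun i _ => by ring
  simp_rw [hprod]
  rw [lintegral_fin_prod_eq_prod_lintegral (f := fun i y => ENNReal.ofReal ((√(2 * π))⁻¹ *
    Real.exp (-((1 - 2 * c * hA.eigenvalues i) / 2) * y ^ 2))) fun i => by fun_prop]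
  exact Finset.prod_congr rfl fun i _ => lintegral_gaussian_exp_mul_sq (hc i)

theorem sum_sq_eigenvalues {p : ℕ} {A : Matrix (Fin p) (Fin p) ℝ} (hA : A.IsHermitian) :
    ∑ i, hA.eigenvalues i ^ 2 = ∑ i, ∑ j, A i j ^ 2 := by
  have h1 : (A * A).trace = ∑ i, hA.eigenvalues i ^ 2 := by
    conv_lhs => rw [hA.spectral_theorem, ← map_mul, Unitary.conjStarAlgAut_apply,
      Matrix.trace_mul_cycle, Unitary.coe_star_mul_self, one_mul, diagonal_mul_diagonal,
      trace_diagonal]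
    simp [sq]
  rw [← h1]
  simp only [trace, diag_apply, mul_apply]
  refine Finset.sum_congr rfl fun i _ => Finset.sum_congr rfl fun j _ => ?_
  rw [sq, ← hA.apply i j, star_trivial]

theorem abs_eigenvalues_le_of_row_sum_le {p : ℕ} {A : Matrix (Fin p) (Fin p) ℝ}
    (hA : A.IsHermitian) {r : ℝ} (hr : ∀ k, ∑ l, |A k l| ≤ r) (i : Fin p) :
    |hA.eigenvalues i| ≤ r := by
  have hev : Module.End.HasEigenvalue (toLin' A) (hA.eigenvalues i) := by
    rw [Module.End.hasEigenvalue_iff_mem_spectrum, Matrix.spectrum_toLin']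
    exact hA.eigenvalues_mem_spectrum_real i
  obtain ⟨k, hk⟩ := eigenvalue_mem_ball hev
  rw [mem_closedBall_iff_norm] at hk
  have h := hr k
  rw [← Finset.add_sum_erase _ _ (Finset.mem_univ k)] at h
  simp only [Real.norm_eq_abs] at hk
  have := abs_sub_abs_le_abs_sub (hA.eigenvalues i) (A k k)
  linarith

/-- Exponential moment bound for a quadratic form with traceless matrix. -/
theorem lintegral_gaussianPDF_one_mul_exp_le {p : ℕ} {A : Matrix (Fin p) (Fin p) ℝ}
    (hA : A.IsHermitian) (htr : A.trace = 0) {r v c : ℝ} (hr : ∀ k, ∑ l, |A k l| ≤ r)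
    (hv : ∑ i, ∑ j, A i j ^ 2 ≤ v) (hc0 : 0 ≤ c) (hc : 2 * c * r < 1) :
    ∫⁻ x, gaussianPDF 1 x * ENNReal.ofReal (Real.exp (c * (x ⬝ᵥ A *ᵥ x))) ≤
      ENNReal.ofReal (Real.exp (c ^ 2 * v / (1 - 2 * c * r))) := by
  have hb : ∀ i, |2 * c * hA.eigenvalues i| ≤ 2 * c * r := fun i => by
    rw [abs_mul, abs_of_nonneg (by positivity : 0 ≤ 2 * c)]
    exact mul_le_mul_of_nonneg_left (abs_eigenvalues_le_of_row_sum_le hA hr i) (by positivity)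
  have htr' : ∑ i, hA.eigenvalues i = 0 := by
    have h := hA.trace_eq_sum_eigenvalues
    rw [htr] at h
    simpa using h.symm
  rw [lintegral_gaussianPDF_one_mul_exp hA fun i => (le_abs_self _).trans_lt ((hb i).trans_lt hc),
    ← ENNReal.ofReal_prod_of_nonneg fun i _ => by positivity]
  refine ENNReal.ofReal_le_ofReal ?_
  refine (Finset.prod_le_prod (fun i _ => by positivity)
    fun i _ => inv_sqrt_one_sub_le_exp (hb i) hc).trans ?_
  rw [← Real.exp_sum, Real.exp_le_exp]
  have hpos : 0 < 1 - 2 * c * r := by linarith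
  calc ∑ i, (2 * c * hA.eigenvalues i / 2 +
          (2 * c * hA.eigenvalues i) ^ 2 / (4 * (1 - 2 * c * r)))
      = ∑ i, (c * hA.eigenvalues i + c ^ 2 / (1 - 2 * c * r) * hA.eigenvalues i ^ 2) := by
        refine Finset.sum_congr rfl fun i _ => ?_
        field_simp
        ring
    _ = c ^ 2 / (1 - 2 * c * r) * ∑ i, ∑ j, A i j ^ 2 := by
        rw [Finset.sum_add_distrib, ← Finset.mul_sum, ← Finset.mul_sum, htr',
          sum_sq_eigenvalues hA]
        ring
    _ ≤ c ^ 2 / (1 - 2 * c * r) * v := by gcongr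
    _ = c ^ 2 * v / (1 - 2 * c * r) := by ring

theorem trace_mul_sampleCov {n p : ℕ} (A : Matrix (Fin p) (Fin p) ℝ) (X : Fin n → Fin p → ℝ) :
    (A * sampleCov X).trace = (n : ℝ)⁻¹ * ∑ k, X k ⬝ᵥ A *ᵥ X k := by
  rw [sampleCov, Matrix.mul_smul, trace_smul, Matrix.mul_sum, trace_sum, smul_eq_mul]
  congr 1
  refine Finset.sum_congr rfl fun k _ => ?_
  simp only [trace, diag_apply, mul_apply, of_apply, dotProduct, mulVec, Finset.mul_sum]
  exact Finset.sum_congr rfl fun i _ => Finset.sum_congr rfl fun j _ => by ring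

/-- Bernstein-type deviation bound for `Tr(A(Σ_n − I_p))` with a symmetric traceless `A`. -/
theorem iidGaussian_one_trace_ge_le {n p : ℕ} (hn : 0 < n) {A : Matrix (Fin p) (Fin p) ℝ}
    (hA : A.IsHermitian) (htr : A.trace = 0) {r v c : ℝ} (hr : ∀ k, ∑ l, |A k l| ≤ r)
    (hv : ∑ i, ∑ j, A i j ^ 2 ≤ v) (hc0 : 0 ≤ c) (hc : 2 * c * r < 1) (t : ℝ) :
    iidGaussian n p 1 {X | t ≤ (A * (sampleCov X - 1)).trace} ≤
      ENNReal.ofReal (Real.exp (n * (c ^ 2 * v / (1 - 2 * c * r) - c * t))) := by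
  have hn' : (0 : ℝ) < n := Nat.cast_pos.2 hn
  set F : (Fin p → ℝ) → ℝ≥0∞ := fun x => ENNReal.ofReal (Real.exp (c * (x ⬝ᵥ A *ᵥ x))) with hF
  have hFm : Measurable F := ((measurable_quadraticForm A).const_mul c).exp.ennreal_ofReal
  have hFm' : Measurable fun X : Fin n → Fin p → ℝ => ∏ k, F (X k) :=
    Finset.measurable_prod _ fun k _ => hFm.comp (measurable_pi_apply k)
  have hpdf : Measurable fun X : Fin n → Fin p → ℝ => ∏ k, gaussianPDF 1 (X k) :=
    Finset.measurable_prod _ fun k _ => measurable_gaussianPDF_one.comp (measurable_pi_apply k)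
  have hsub : {X : Fin n → Fin p → ℝ | t ≤ (A * (sampleCov X - 1)).trace} ⊆
      {X | 1 ≤ ENNReal.ofReal (Real.exp (-(n * (c * t)))) * ∏ k, F (X k)} := fun X hX => by
    rw [Set.mem_ofPred_eq, Matrix.mul_sub, Matrix.mul_one, trace_sub, htr, sub_zero,
      trace_mul_sampleCov, inv_mul_eq_div, le_div_iff₀ hn'] at hX
    rw [Set.mem_ofPred_eq, hF, ← ENNReal.ofReal_prod_of_nonneg fun i _ => by positivity,
      ← ENNReal.ofReal_mul (by positivity), ← Real.exp_sum, ← Real.exp_add, ENNReal.one_le_ofReal,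
      Real.one_le_exp_iff, ← Finset.mul_sum]
    nlinarith [mul_le_mul_of_nonneg_left hX hc0]
  calc iidGaussian n p 1 {X | t ≤ (A * (sampleCov X - 1)).trace}
      ≤ iidGaussian n p 1
          {X | 1 ≤ ENNReal.ofReal (Real.exp (-(n * (c * t)))) * ∏ k, F (X k)} :=
        measure_mono hsub
    _ ≤ ∫⁻ X, ENNReal.ofReal (Real.exp (-(n * (c * t)))) * ∏ k, F (X k) ∂iidGaussian n p 1 := by
        simpa using mul_meas_ge_le_lintegral (μ := iidGaussian n p 1) (hFm'.const_mul _) 1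
    _ = ENNReal.ofReal (Real.exp (-(n * (c * t)))) *
          ∫⁻ X : Fin n → Fin p → ℝ, ∏ k, (gaussianPDF 1 (X k) * F (X k)) := by
        rw [lintegral_const_mul _ hFm', iidGaussian,
          lintegral_withDensity_eq_lintegral_mul _ hpdf hFm']
        simp only [Pi.mul_apply, Finset.prod_mul_distrib]
    _ = ENNReal.ofReal (Real.exp (-(n * (c * t)))) *
          (∫⁻ x, gaussianPDF 1 x * F x) ^ n := by
        rw [lintegral_fin_prod_eq_prod_lintegral (f := fun _ x => gaussianPDF 1 x * F x)
          fun _ => measurable_gaussianPDF_one.mul hFm]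
        simp
    _ ≤ ENNReal.ofReal (Real.exp (-(n * (c * t)))) *
          ENNReal.ofReal (Real.exp (c ^ 2 * v / (1 - 2 * c * r))) ^ n := by
        gcongr
        exact lintegral_gaussianPDF_one_mul_exp_le hA htr hr hv hc0 hc
    _ = ENNReal.ofReal (Real.exp (n * (c ^ 2 * v / (1 - 2 * c * r) - c * t))) := by
        rw [← ENNReal.ofReal_pow (by positivity), ← ENNReal.ofReal_mul (by positivity),
          ← Real.exp_nat_mul, ← Real.exp_add]
        congr 2
        ring

theorem isHermitian_sum_lagMatrix (p : ℕ) (W : Finset ℕ) :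
    (∑ j ∈ W, lagMatrix p j).IsHermitian := by
  refine Matrix.IsHermitian.ext fun k l => ?_
  simp only [star_trivial, Matrix.sum_apply, lagMatrix, of_apply]
  refine Finset.sum_congr rfl fun j _ => ?_
  rw [← Int.natAbs_neg, neg_sub]

theorem trace_sum_lagMatrix {p : ℕ} {W : Finset ℕ} (hW : ∀ j ∈ W, 1 ≤ j) :
    (∑ j ∈ W, lagMatrix p j).trace = 0 := by
  rw [trace_sum]
  refine Finset.sum_eq_zero fun j hj => Finset.sum_eq_zero fun k _ => ?_
  have : (0 : ℕ) ≠ j := by have := hW j hj; omega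
  simp [lagMatrix, this]

theorem sum_row_abs_lagMatrix_le {p j : ℕ} (hj : j < p) (k : Fin p) :
    ∑ l, |lagMatrix p j k l| ≤ 1 / ((p : ℝ) - j) := by
  have hpj : (0 : ℝ) < p - j := sub_pos.2 (Nat.cast_lt.2 hj)
  have hcard : (Finset.univ.filter fun l : Fin p => ((k : ℤ) - (l : ℤ)).natAbs = j).card ≤ 2 := by
    refine (Finset.card_le_card_of_injOn (t := ({(k : ℤ) - j, (k : ℤ) + j} : Finset ℤ))
      (fun l : Fin p => (l : ℤ)) ?_ ?_).trans Finset.card_le_two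
    · intro l hl
      simp only [Finset.coe_filter, Finset.mem_univ, true_and, Set.mem_ofPred_eq] at hl
      simp only [Finset.coe_insert, Finset.coe_singleton, Set.mem_insert_iff,
        Set.mem_singleton_iff]
      omega
    · intro a _ b _ hab
      exact Fin.ext (by simpa using hab)
  calc ∑ l, |lagMatrix p j k l|
      = (Finset.univ.filter fun l : Fin p => ((k : ℤ) - (l : ℤ)).natAbs = j).card *
          (1 / (2 * ((p : ℝ) - j))) := by
        rw [← nsmul_eq_mul, ← Finset.sum_const, Finset.sum_filter]
        refine Finset.sum_congr rfl fun l _ => ?_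
        simp only [lagMatrix, of_apply]
        split_ifs
        · exact abs_of_nonneg (by positivity)
        · simp
    _ ≤ 2 * (1 / (2 * ((p : ℝ) - j))) := by
        gcongr
        exact_mod_cast hcard
    _ = 1 / ((p : ℝ) - j) := by
        field_simp

theorem sum_sq_lagMatrix_le {p j : ℕ} (hj : j < p) :
    ∑ k, ∑ l, lagMatrix p j k l ^ 2 ≤ 1 / (2 * ((p : ℝ) - j)) := by
  have hpj : (0 : ℝ) < p - j := sub_pos.2 (Nat.cast_lt.2 hj)
  have hcard : (Finset.univ.filter fun q : Fin p × Fin p =>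
      ((q.1 : ℤ) - (q.2 : ℤ)).natAbs = j).card ≤ (p - j) * 2 := by
    refine (Finset.card_le_card_of_injOn
      (t := Finset.range (p - j) ×ˢ (Finset.univ : Finset Bool))
      (fun q => (min (q.1 : ℕ) q.2, decide (q.1 < q.2))) ?_ ?_).trans (by simp)
    · rintro ⟨k, l⟩ hq
      simp only [Finset.coe_filter, Finset.mem_univ, true_and, Set.mem_ofPred_eq] at hq
      simp only [Finset.coe_product, Finset.coe_range, Finset.coe_univ, Set.mem_prod,
        Set.mem_Iio, Set.mem_univ, and_true]
      omega
    · rintro ⟨k, l⟩ hq ⟨k', l'⟩ hq' h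
      simp only [Finset.coe_filter, Finset.mem_univ, true_and, Set.mem_ofPred_eq] at hq hq'
      simp only [Prod.mk.injEq, decide_eq_decide, Fin.lt_def] at h
      simp only [Prod.mk.injEq, Fin.ext_iff]
      omega
  have hcard' : ((Finset.univ.filter fun q : Fin p × Fin p =>
      ((q.1 : ℤ) - (q.2 : ℤ)).natAbs = j).card : ℝ) ≤ ((p : ℝ) - j) * 2 := by
    rw [← Nat.cast_sub hj.le]
    exact_mod_cast hcard
  calc ∑ k, ∑ l, lagMatrix p j k l ^ 2
      = (Finset.univ.filter fun q : Fin p × Fin p => ((q.1 : ℤ) - (q.2 : ℤ)).natAbs = j).card *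
          (1 / (2 * ((p : ℝ) - j))) ^ 2 := by
        rw [← nsmul_eq_mul, ← Finset.sum_const, Finset.sum_filter, Fintype.sum_prod_type]
        refine Finset.sum_congr rfl fun k _ => Finset.sum_congr rfl fun l _ => ?_
        simp only [lagMatrix, of_apply, ite_pow]
        simp
    _ ≤ ((p : ℝ) - j) * 2 * (1 / (2 * ((p : ℝ) - j))) ^ 2 := by gcongr
    _ = 1 / (2 * ((p : ℝ) - j)) := by
        field_simp

theorem sum_lagMatrix_apply_sq (p : ℕ) (W : Finset ℕ) (k l : Fin p) :
    (∑ j ∈ W, lagMatrix p j) k l ^ 2 = ∑ j ∈ W, lagMatrix p j k l ^ 2 := by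
  simp only [Matrix.sum_apply, lagMatrix, of_apply, ite_pow, ne_eq, OfNat.ofNat_ne_zero,
    not_false_eq_true, zero_pow, Finset.sum_ite_eq]

theorem sum_row_abs_sum_lagMatrix_le {p S : ℕ} {W : Finset ℕ} (hW : ∀ j ∈ W, j ≤ S) (hS : S < p)
    (k : Fin p) :
    ∑ l, |(∑ j ∈ W, lagMatrix p j) k l| ≤ (W.card : ℝ) / ((p : ℝ) - S) := by
  have hpS : (0 : ℝ) < p - S := sub_pos.2 (Nat.cast_lt.2 hS)
  calc ∑ l, |(∑ j ∈ W, lagMatrix p j) k l|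
      ≤ ∑ l, ∑ j ∈ W, |lagMatrix p j k l| := by
        refine Finset.sum_le_sum fun l _ => ?_
        rw [Matrix.sum_apply]
        exact Finset.abs_sum_le_sum_abs _ _
    _ = ∑ j ∈ W, ∑ l, |lagMatrix p j k l| := Finset.sum_comm
    _ ≤ ∑ j ∈ W, 1 / ((p : ℝ) - S) := by
        refine Finset.sum_le_sum fun j hj => ?_
        refine (sum_row_abs_lagMatrix_le ((hW j hj).trans_lt hS) k).trans ?_
        have : (j : ℝ) ≤ S := Nat.cast_le.2 (hW j hj)
        gcongr
    _ = (W.card : ℝ) / ((p : ℝ) - S) := by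
        rw [Finset.sum_const, nsmul_eq_mul, mul_one_div]

theorem sum_sq_sum_lagMatrix_le {p S : ℕ} {W : Finset ℕ} (hW : ∀ j ∈ W, j ≤ S) (hS : S < p) :
    ∑ k, ∑ l, (∑ j ∈ W, lagMatrix p j) k l ^ 2 ≤ (W.card : ℝ) / ((p : ℝ) - S) / 2 := by
  have hpS : (0 : ℝ) < p - S := sub_pos.2 (Nat.cast_lt.2 hS)
  calc ∑ k, ∑ l, (∑ j ∈ W, lagMatrix p j) k l ^ 2
      = ∑ j ∈ W, ∑ k, ∑ l, lagMatrix p j k l ^ 2 := by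
        simp only [sum_lagMatrix_apply_sq]
        rw [Finset.sum_comm (s := W)]
        exact Finset.sum_congr rfl fun k _ => Finset.sum_comm
    _ ≤ ∑ j ∈ W, 1 / (2 * ((p : ℝ) - S)) := by
        refine Finset.sum_le_sum fun j hj => ?_
        refine (sum_sq_lagMatrix_le ((hW j hj).trans_lt hS)).trans ?_
        have : (j : ℝ) ≤ S := Nat.cast_le.2 (hW j hj)
        gcongr
    _ = (W.card : ℝ) / ((p : ℝ) - S) / 2 := by
        rw [Finset.sum_const, nsmul_eq_mul, mul_one_div, div_div, mul_comm 2]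

end Auxiliary

/-- Deviation bound for `Tr(A_W(Σ_n − I_p))` under the null. -/
theorem deviation_null_lagMatrix_sum {p n S : ℕ} (hn : 0 < n) (hS1 : 1 ≤ S)
    (hS : (S : ℝ) < (p:ℝ)/2)
    (W : Finset ℕ) (hW : W ⊆ Finset.Icc 1 S) (hw : 1 ≤ W.card)
    (K u : ℝ) (hK : K ∈ Set.Ioo (0:ℝ) 1) (hu : 0 < u) :
    (iidGaussian n p 1) {X | Matrix.trace ((∑ j ∈ W, lagMatrix p j) * (sampleCov X - 1)) ≥
        max (Real.sqrt (u / (2 * (1 - K))) * Real.sqrt ((W.card : ℝ) / (n * ((p:ℝ) - S))))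
          ((u / K) * (W.card : ℝ) / (n * ((p:ℝ) - S)))}
      ≤ ENNReal.ofReal (Real.exp (-u/4)) := by
  have hWmem : ∀ j ∈ W, 1 ≤ j ∧ j ≤ S := fun j hj => Finset.mem_Icc.1 (hW hj)
  have hSp : S < p := by
    have : (S : ℝ) < p := by linarith [(Nat.cast_nonneg p : (0 : ℝ) ≤ p)]
    exact_mod_cast this
  have hpS : (0 : ℝ) < p - S := sub_pos.2 (Nat.cast_lt.2 hSp)
  have hn' : (0 : ℝ) < n := Nat.cast_pos.2 hn
  have hwpos : (0 : ℝ) < W.card := Nat.cast_pos.2 hw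
  obtain ⟨hK0, hK1⟩ := hK
  have hK1' : 0 < 1 - K := by linarith
  obtain ⟨r, hr⟩ : ∃ r : ℝ, r = (W.card : ℝ) / ((p : ℝ) - S) := ⟨_, rfl⟩
  have hrpos : 0 < r := hr ▸ div_pos hwpos hpS
  have hrn : (W.card : ℝ) / (n * ((p : ℝ) - S)) = r / n := by
    rw [hr, div_div, mul_comm]
  rw [mul_div_assoc, hrn]
  set t := max (√(u / (2 * (1 - K))) * √(r / n)) (u / K * (r / n)) with ht
  have ht1 : u * r / (2 * n) ≤ (1 - K) * t ^ 2 := by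
    have h : (√(u / (2 * (1 - K))) * √(r / n)) ^ 2 ≤ t ^ 2 :=
      pow_le_pow_left₀ (by positivity) (le_max_left _ _) 2
    rw [mul_pow, Real.sq_sqrt (by positivity), Real.sq_sqrt (by positivity)] at h
    refine le_trans (le_of_eq ?_) (mul_le_mul_of_nonneg_left h hK1'.le)
    field_simp
  have ht2 : u * r / n ≤ K * t := by
    refine le_trans (le_of_eq ?_) (mul_le_mul_of_nonneg_left (le_max_right _ _) hK0.le)
    field_simp
  have htpos : 0 < t := lt_of_lt_of_le (by positivity) (le_max_right _ _)
  have hmain : u * r * (1 + 2 * t) ≤ 2 * n * t ^ 2 := by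
    rw [div_le_iff₀ (by positivity)] at ht1 ht2
    nlinarith [mul_le_mul_of_nonneg_right ht2 htpos.le]
  have hc : 2 * (t / (r * (1 + 2 * t))) * r = 2 * t / (1 + 2 * t) := by
    field_simp
  refine (iidGaussian_one_trace_ge_le hn (isHermitian_sum_lagMatrix p W)
    (trace_sum_lagMatrix fun j hj => (hWmem j hj).1)
    (sum_row_abs_sum_lagMatrix_le (fun j hj => (hWmem j hj).2) hSp)
    (sum_sq_sum_lagMatrix_le (fun j hj => (hWmem j hj).2) hSp)
    (c := t / (r * (1 + 2 * t))) (by positivity) ?_ t).trans ?_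
  · rw [← hr, hc, div_lt_one (by positivity)]
    linarith
  · refine ENNReal.ofReal_le_ofReal (Real.exp_le_exp.2 ?_)
    have h1 : 1 - 2 * t / (1 + 2 * t) = 1 / (1 + 2 * t) := by
      field_simp
      ring
    have h2 : (n : ℝ) * ((t / (r * (1 + 2 * t))) ^ 2 * (r / 2) / (1 / (1 + 2 * t)) -
        t / (r * (1 + 2 * t)) * t) = -(n * t ^ 2 / (2 * (r * (1 + 2 * t)))) := by
      field_simp
      ring
    rw [← hr, hc, h1, h2, neg_div, neg_le_neg_iff, le_div_iff₀ (by positivity)]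
    linarith
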